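/- Let 0 ≤ q < 1 and let Ω ∈ U_q(s_p, M_p) be a p×p matrix with inverse Σ = Ω^{-1}. Let Σ̂ ∈ ℝ^{p×p} be a symmetric matrix and let λ ≥ 0 satisfy λ ≥ 3‖Ω‖_{L1}‖Σ̂ − Σ‖_∞ and ‖Ω‖_{L1}^{−q} λ^{1−q} s_p ≤ 1/2. Let Ω̂ = (β̂_1,…,β̂_p) where, for each i, β̂_i is a SCIO column estimator (a global minimizer of β ↦ (1/2)βᵀΣ̂β − e_iᵀβ + λ|β|_1), and let Ω̃ be the symmetrization of Ω̂. Then the averaged squared Frobenius norm satisfies (1/p)‖Ω̃ − Ω‖_F^2 ≤ ‖Ω̃ − Ω‖_{L1} · ‖Ω̃ − Ω‖_∞ ≤ 264 λ^{2−q} ‖Ω‖_{L1}^{2−q} s_p. -/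

import Mathlib

open Matrix
open scoped BigOperators

/-- The ℓ1 norm of a vector in ℝ^p. -/
noncomputable def vecL1 {p : ℕ} (a : Fin p → ℝ) : ℝ := ∑ i, |a i|

/-- The entrywise supremum norm of a p×p matrix. -/
noncomputable def matLinf {p : ℕ} (A : Matrix (Fin p) (Fin p) ℝ) : ℝ := ⨆ i, ⨆ j, |A i j|

/-- The maximum absolute column-sum norm of a p×p matrix. -/
noncomputable def matL1 {p : ℕ} (A : Matrix (Fin p) (Fin p) ℝ) : ℝ := ⨆ j, ∑ i, |A i j|

/-- The SCIO objective function β ↦ (1/2)βᵀ Σ̂ β − eᵀβ + λ|β|₁. -/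
noncomputable def scioObj {p : ℕ} (S : Matrix (Fin p) (Fin p) ℝ) (e : Fin p → ℝ)
    (lam : ℝ) (β : Fin p → ℝ) : ℝ :=
  (1 / 2) * (β ⬝ᵥ S.mulVec β) - e ⬝ᵥ β + lam * vecL1 β

/-- Symmetrization of a matrix: ω̃_ij = β̂_ij if |β̂_ij| ≤ |β̂_ji|, and β̂_ji otherwise. -/
noncomputable def symmetrize {p : ℕ} (A : Matrix (Fin p) (Fin p) ℝ) : Matrix (Fin p) (Fin p) ℝ :=
  fun i j => if |A i j| ≤ |A j i| then A i j else A j i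

section MatrixNorms

variable {p : ℕ} (A : Matrix (Fin p) (Fin p) ℝ)

lemma abs_le_matLinf (i j : Fin p) : |A i j| ≤ matLinf A :=
  (le_ciSup (f := fun j => |A i j|) (Set.finite_range _).bddAbove j).trans
    (le_ciSup (f := fun i => ⨆ j, |A i j|) (Set.finite_range _).bddAbove i)

lemma colSum_le_matL1 (j : Fin p) : ∑ i, |A i j| ≤ matL1 A :=
  le_ciSup (f := fun j => ∑ i, |A i j|) (Set.finite_range _).bddAbove j

lemma matLinf_nonneg : 0 ≤ matLinf A :=
  Real.iSup_nonneg fun _ => Real.iSup_nonneg fun _ => abs_nonneg _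

lemma matL1_nonneg : 0 ≤ matL1 A :=
  Real.iSup_nonneg fun _ => Finset.sum_nonneg fun _ _ => abs_nonneg _

variable {A}

lemma matLinf_le {c : ℝ} (hc : 0 ≤ c) (h : ∀ i j, |A i j| ≤ c) : matLinf A ≤ c :=
  Real.iSup_le (fun i => Real.iSup_le (h i) hc) hc

lemma matL1_le {c : ℝ} (hc : 0 ≤ c) (h : ∀ j, ∑ i, |A i j| ≤ c) : matL1 A ≤ c :=
  Real.iSup_le h hc

/-- The averaged squared Frobenius norm is at most the product of the column-sum norm and the
entrywise supremum norm. -/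
lemma average_frobenius_sq_le (A : Matrix (Fin p) (Fin p) ℝ) :
    (1 / (p : ℝ)) * (∑ i, ∑ j, (A i j) ^ 2) ≤ matL1 A * matLinf A := by
  have hsum : ∑ i, ∑ j, (A i j) ^ 2 ≤ p * (matL1 A * matLinf A) := by
    rw [Finset.sum_comm]
    calc ∑ j, ∑ i, (A i j) ^ 2 ≤ ∑ _j : Fin p, matL1 A * matLinf A := by
          refine Finset.sum_le_sum fun j _ => ?_
          calc ∑ i, (A i j) ^ 2 ≤ ∑ i, |A i j| * matLinf A := by
                refine Finset.sum_le_sum fun i _ => ?_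
                rw [← sq_abs, sq]
                exact mul_le_mul_of_nonneg_left (abs_le_matLinf A i j) (abs_nonneg _)
            _ = (∑ i, |A i j|) * matLinf A := (Finset.sum_mul ..).symm
            _ ≤ matL1 A * matLinf A :=
                mul_le_mul_of_nonneg_right (colSum_le_matL1 A j) (matLinf_nonneg A)
      _ = p * (matL1 A * matLinf A) := by simp
  rcases Nat.eq_zero_or_pos p with hp | hp
  · have := mul_nonneg (matL1_nonneg A) (matLinf_nonneg A)
    simpa [hp] using this
  · have hp' : (0 : ℝ) < p := by exact_mod_cast hp
    rw [one_div, inv_mul_le_iff₀ hp']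
    exact hsum

lemma abs_mulVec_le_matLinf (A : Matrix (Fin p) (Fin p) ℝ) (v : Fin p → ℝ) (k : Fin p) :
    |(A *ᵥ v) k| ≤ matLinf A * vecL1 v := by
  rw [vecL1, Finset.mul_sum, mulVec, dotProduct]
  refine (Finset.abs_sum_le_sum_abs _ _).trans (Finset.sum_le_sum fun i _ => ?_)
  rw [abs_mul]
  exact mul_le_mul_of_nonneg_right (abs_le_matLinf A k i) (abs_nonneg _)

lemma abs_mulVec_le_matL1 (hA : A.IsSymm) {v : Fin p → ℝ} {c : ℝ} (hc : 0 ≤ c)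
    (hv : ∀ i, |v i| ≤ c) (k : Fin p) : |(A *ᵥ v) k| ≤ matL1 A * c := by
  calc |(A *ᵥ v) k| ≤ ∑ i, |A i k| * c := by
        rw [mulVec, dotProduct]
        refine (Finset.abs_sum_le_sum_abs _ _).trans (Finset.sum_le_sum fun i _ => ?_)
        rw [abs_mul, hA.apply]
        exact mul_le_mul_of_nonneg_left (hv i) (abs_nonneg _)
    _ = (∑ i, |A i k|) * c := (Finset.sum_mul ..).symm
    _ ≤ matL1 A * c := mul_le_mul_of_nonneg_right (colSum_le_matL1 A k) hc

end MatrixNorms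

/-- A quadratic without constant term that is nonnegative on the positive half-line has
nonnegative coefficients. -/
lemma coeff_nonneg_of_forall_pos {a b : ℝ} (h : ∀ t : ℝ, 0 < t → 0 ≤ a * t + b * t ^ 2) :
    0 ≤ a ∧ 0 ≤ b := by
  have h' : ∀ t : ℝ, 0 < t → 0 ≤ a + b * t := fun t ht => by
    have := h t ht
    have e : a * t + b * t ^ 2 = t * (a + b * t) := by ring
    rw [e] at this
    exact nonneg_of_mul_nonneg_right this ht
  constructor
  · by_contra! ha
    have hb : 0 < |b| + 1 := by positivity
    have := h' (-a / (2 * (|b| + 1))) (by apply div_pos <;> linarith)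
    have h2 : b * (-a / (2 * (|b| + 1))) ≤ (|b| + 1) * (-a / (2 * (|b| + 1))) :=
      mul_le_mul_of_nonneg_right (by linarith [le_abs_self b])
        (div_nonneg (by linarith) (by linarith))
    have h3 : (|b| + 1) * (-a / (2 * (|b| + 1))) = -a / 2 := by field_simp
    linarith
  · by_contra! hb
    have := h' ((|a| + 1) / -b) (div_pos (by positivity) (by linarith))
    have h3 : b * ((|a| + 1) / -b) = -(|a| + 1) := by
      rw [div_neg, mul_neg, mul_div_cancel₀ _ hb.ne]
    linarith [le_abs_self a]

section Scio

variable {p : ℕ} {S : Matrix (Fin p) (Fin p) ℝ} {e b β : Fin p → ℝ} {lam : ℝ}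

lemma scioObj_add (hS : S.IsSymm) (e : Fin p → ℝ) (lam : ℝ) (β v : Fin p → ℝ) :
    scioObj S e lam (β + v) = scioObj S e lam β + (S *ᵥ β - e) ⬝ᵥ v
      + (1 / 2) * (v ⬝ᵥ S *ᵥ v) + lam * (vecL1 (β + v) - vecL1 β) := by
  have h1 : β ⬝ᵥ S *ᵥ v = (S *ᵥ β) ⬝ᵥ v := by
    rw [dotProduct_mulVec, ← mulVec_transpose, hS.eq]
  have h2 : v ⬝ᵥ S *ᵥ β = (S *ᵥ β) ⬝ᵥ v := dotProduct_comm _ _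
  simp only [scioObj, mulVec_add, add_dotProduct, dotProduct_add, sub_dotProduct, h1, h2]
  ring

lemma vecL1_add_le (v w : Fin p → ℝ) : vecL1 (v + w) ≤ vecL1 v + vecL1 w := by
  simp only [vecL1, ← Finset.sum_add_distrib]
  exact Finset.sum_le_sum fun i _ => abs_add_le _ _

lemma vecL1_smul (t : ℝ) (v : Fin p → ℝ) : vecL1 (t • v) = |t| * vecL1 v := by
  simp [vecL1, abs_mul, Finset.mul_sum]

/-- First- and second-order optimality conditions at a global minimizer. -/
lemma scioObj_minimizer_conditions (hS : S.IsSymm) (hlam : 0 ≤ lam)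
    (hmin : ∀ β, scioObj S e lam b ≤ scioObj S e lam β) (v : Fin p → ℝ) :
    0 ≤ (S *ᵥ b - e) ⬝ᵥ v + lam * vecL1 v ∧ 0 ≤ v ⬝ᵥ S *ᵥ v := by
  have key := coeff_nonneg_of_forall_pos
    (a := (S *ᵥ b - e) ⬝ᵥ v + lam * vecL1 v) (b := (1 / 2) * (v ⬝ᵥ S *ᵥ v)) fun t ht => by
      have h := hmin (b + t • v)
      have h1 : lam * (vecL1 (b + t • v) - vecL1 b) ≤ lam * (t * vecL1 v) := by
        refine mul_le_mul_of_nonneg_left ?_ hlam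
        have := vecL1_add_le b (t • v)
        rw [vecL1_smul, abs_of_pos ht] at this
        linarith
      rw [scioObj_add hS] at h
      simp only [mulVec_smul, dotProduct_smul, smul_dotProduct, smul_eq_mul] at h
      linarith
  exact ⟨key.1, by linarith [key.2]⟩

lemma abs_gradient_le_of_minimizer (hS : S.IsSymm) (hlam : 0 ≤ lam)
    (hmin : ∀ β, scioObj S e lam b ≤ scioObj S e lam β) (k : Fin p) :
    |(S *ᵥ b - e) k| ≤ lam := by
  have hL : vecL1 (Pi.single k (1 : ℝ)) = 1 := by
    simp [vecL1, Pi.single_apply, apply_ite abs]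
  have hL' : vecL1 (-Pi.single k (1 : ℝ)) = 1 := by
    simpa [vecL1] using hL
  have h1 := (scioObj_minimizer_conditions hS hlam hmin (Pi.single k 1)).1
  have h2 := (scioObj_minimizer_conditions hS hlam hmin (-Pi.single k 1)).1
  rw [hL, dotProduct_single] at h1
  rw [hL', dotProduct_neg, dotProduct_single] at h2
  rw [abs_le]
  constructor <;> linarith

/-- The estimation error lies in a cone, up to the part of the target outside `J`. -/
lemma vecL1_error_le (hS : S.IsSymm) (hlam : 0 < lam)
    (hmin : ∀ β, scioObj S e lam b ≤ scioObj S e lam β)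
    (hβ : ∀ k, |(S *ᵥ β - e) k| ≤ lam / 3) (J : Finset (Fin p)) :
    vecL1 (b - β) ≤ 3 * ∑ k ∈ J, |b k - β k| + 3 * ∑ k ∈ Jᶜ, |β k| := by
  have hQ := (scioObj_minimizer_conditions hS hlam.le hmin (b - β)).2
  have hobj := hmin β
  have hexp := scioObj_add hS e lam β (b - β)
  rw [add_sub_cancel] at hexp
  have hg : -(lam / 3 * vecL1 (b - β)) ≤ (S *ᵥ β - e) ⬝ᵥ (b - β) := by
    rw [vecL1, Finset.mul_sum, ← Finset.sum_neg_distrib]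
    refine Finset.sum_le_sum fun i _ => ?_
    have := mul_le_mul_of_nonneg_right (hβ i) (abs_nonneg ((b - β) i))
    rw [← abs_mul] at this
    linarith [neg_abs_le ((S *ᵥ β - e) i * (b - β) i)]
  have hL : lam * (vecL1 b - vecL1 β - 1 / 3 * vecL1 (b - β)) ≤ lam * 0 := by linarith
  have hL' := le_of_mul_le_mul_left hL hlam
  have hJ : ∀ f : Fin p → ℝ, vecL1 f = ∑ k ∈ J, |f k| + ∑ k ∈ Jᶜ, |f k| := fun f =>
    (Finset.sum_add_sum_compl J _).symm
  have h1 : ∑ k ∈ J, |β k| ≤ ∑ k ∈ J, |b k| + ∑ k ∈ J, |b k - β k| := by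
    rw [← Finset.sum_add_distrib]
    refine Finset.sum_le_sum fun i _ => ?_
    linarith [abs_sub_abs_le_abs_sub (β i) (b i), abs_sub_comm (β i) (b i)]
  have h2 : ∑ k ∈ Jᶜ, |b k - β k| ≤ ∑ k ∈ Jᶜ, |b k| + ∑ k ∈ Jᶜ, |β k| := by
    rw [← Finset.sum_add_distrib]
    exact Finset.sum_le_sum fun i _ => abs_sub _ _
  rw [hJ b, hJ β, hJ (b - β)] at hL'
  rw [hJ (b - β)]
  simp only [Pi.sub_apply] at *
  linarith

end Scio

section WeakSparsity

variable {ι : Type*} [Fintype ι] {q s t : ℝ} {β : ι → ℝ}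

lemma card_large_mul_le (ht : 0 < t) (hq : 0 ≤ q) (hβ : ∑ i, |β i| ^ q ≤ s) :
    ((Finset.univ.filter fun i => t ≤ |β i|).card : ℝ) * t ≤ s * t ^ (1 - q) := by
  have h : ((Finset.univ.filter fun i => t ≤ |β i|).card : ℝ) * t ^ q ≤ s := by
    rw [← nsmul_eq_mul]
    refine (Finset.card_nsmul_le_sum _ (fun i => |β i| ^ q) _ fun i hi => ?_).trans
      ((Finset.sum_le_sum_of_subset_of_nonneg (Finset.filter_subset _ _)
        fun i _ _ => by positivity).trans hβ)
    exact Real.rpow_le_rpow ht.le (Finset.mem_filter.1 hi).2 hq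
  calc _ = (((Finset.univ.filter fun i => t ≤ |β i|).card : ℝ) * t ^ q) * t ^ (1 - q) := by
        rw [mul_assoc, ← Real.rpow_add ht]; simp
    _ ≤ s * t ^ (1 - q) := mul_le_mul_of_nonneg_right h (by positivity)

lemma sum_small_le [DecidableEq ι] (ht : 0 < t) (hq : q < 1) (hβ : ∑ i, |β i| ^ q ≤ s) :
    ∑ i ∈ (Finset.univ.filter fun i => t ≤ |β i|)ᶜ, |β i| ≤ s * t ^ (1 - q) := by
  calc _ ≤ ∑ i ∈ (Finset.univ.filter fun i => t ≤ |β i|)ᶜ, |β i| ^ q * t ^ (1 - q) := by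
        refine Finset.sum_le_sum fun i hi => ?_
        have hi' : |β i| < t := by simpa using hi
        rcases (abs_nonneg (β i)).eq_or_lt with h0 | h0
        · rw [← h0]; positivity
        · calc |β i| = |β i| ^ q * |β i| ^ (1 - q) := by rw [← Real.rpow_add h0]; simp
            _ ≤ |β i| ^ q * t ^ (1 - q) := mul_le_mul_of_nonneg_left
                (Real.rpow_le_rpow h0.le hi'.le (by linarith)) (by positivity)
    _ = (∑ i ∈ (Finset.univ.filter fun i => t ≤ |β i|)ᶜ, |β i| ^ q) * t ^ (1 - q) :=
        (Finset.sum_mul ..).symm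
    _ ≤ s * t ^ (1 - q) := mul_le_mul_of_nonneg_right
        ((Finset.sum_le_sum_of_subset_of_nonneg (Finset.subset_univ _)
          fun i _ _ => by positivity).trans hβ) (by positivity)

end WeakSparsity

section Symmetrize

variable {p : ℕ}

lemma abs_symmetrize_le (A : Matrix (Fin p) (Fin p) ℝ) (i j : Fin p) :
    |symmetrize A i j| ≤ |A i j| := by
  unfold symmetrize
  split_ifs with h
  · exact le_rfl
  · exact (not_le.1 h).le

lemma abs_symmetrize_sub_le {A B : Matrix (Fin p) (Fin p) ℝ} (hB : B.IsSymm) {c : ℝ}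
    (h : ∀ i j, |A i j - B i j| ≤ c) (i j : Fin p) : |(symmetrize A - B) i j| ≤ c := by
  rw [Matrix.sub_apply, symmetrize]
  split_ifs
  · exact h i j
  · rw [← hB.apply i j]; exact h j i

end Symmetrize

section Column

variable {p : ℕ} {Ω S : Matrix (Fin p) (Fin p) ℝ} {lam : ℝ} {b : Fin p → ℝ} {j : Fin p}

lemma inv_mulVec_col (hΩ : Ω.PosDef) (j : Fin p) :
    Ω⁻¹ *ᵥ (fun k => Ω k j) = Pi.single j 1 := by
  have h := nonsing_inv_mul Ω (Ω.isUnit_iff_isUnit_det.1 hΩ.isUnit)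
  ext i
  have := congrFun (congrFun h i) j
  rw [mul_apply, one_apply] at this
  simpa [mulVec, dotProduct, Pi.single_apply] using this

lemma abs_gradient_target_le (hΩ : Ω.PosDef) (hlam : 3 * matL1 Ω * matLinf (S - Ω⁻¹) ≤ lam)
    (j k : Fin p) : |(S *ᵥ (fun k => Ω k j) - Pi.single j (1 : ℝ) : Fin p → ℝ) k| ≤ lam / 3 := by
  rw [← inv_mulVec_col hΩ, ← sub_mulVec]
  have h1 := abs_mulVec_le_matLinf (S - Ω⁻¹) (fun k => Ω k j) k
  have h2 := mul_le_mul_of_nonneg_left (colSum_le_matL1 Ω j) (matLinf_nonneg (S - Ω⁻¹))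
  rw [vecL1] at h1
  linarith

/-- The entrywise error of a column is controlled by its `ℓ1` error. -/
lemma abs_error_le (hΩsym : Ω.IsSymm) (hΩ : Ω.PosDef) (hS : S.IsSymm) (hlam0 : 0 ≤ lam)
    (hlam : 3 * matL1 Ω * matLinf (S - Ω⁻¹) ≤ lam)
    (hmin : ∀ β, scioObj S (Pi.single j 1) lam b ≤ scioObj S (Pi.single j 1) lam β)
    (k : Fin p) :
    |b k - Ω k j| ≤ 4 / 3 * (lam * matL1 Ω) + lam / 3 * vecL1 (b - fun k => Ω k j) := by
  set h : Fin p → ℝ := b - fun k => Ω k j with hh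
  have hv0 : 0 ≤ vecL1 h := Finset.sum_nonneg fun _ _ => abs_nonneg _
  have hinv : Ω *ᵥ (Ω⁻¹ *ᵥ h) = h := by
    rw [mulVec_mulVec, mul_nonsing_inv Ω (Ω.isUnit_iff_isUnit_det.1 hΩ.isUnit), one_mulVec]
  have hbound : ∀ i, |(Ω⁻¹ *ᵥ h) i| ≤ 4 / 3 * lam + matLinf (S - Ω⁻¹) * vecL1 h := fun i => by
    have h1 := abs_gradient_le_of_minimizer hS hlam0 hmin i
    have h2 := abs_gradient_target_le hΩ hlam j i
    have h3 := abs_mulVec_le_matLinf (S - Ω⁻¹) h i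
    have he : (Ω⁻¹ *ᵥ h) i = (S *ᵥ b - Pi.single j (1 : ℝ) : Fin p → ℝ) i
        - (S *ᵥ (fun k => Ω k j) - Pi.single j (1 : ℝ) : Fin p → ℝ) i - ((S - Ω⁻¹) *ᵥ h) i := by
      rw [sub_mulVec, hh, mulVec_sub S]
      simp only [Pi.sub_apply]
      ring
    rw [he]
    rw [abs_le] at *
    constructor <;> linarith [h1.1, h1.2, h2.1, h2.2, h3.1, h3.2]
  have hfin := abs_mulVec_le_matL1 hΩsym
    (add_nonneg (by positivity) (mul_nonneg (matLinf_nonneg _) hv0)) hbound k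
  rw [hinv] at hfin
  have := mul_le_mul_of_nonneg_right hlam hv0
  change |h k| ≤ _
  linarith

/-- Entrywise and `ℓ1` error bounds for a column, in terms of a set `J` of large entries. -/
lemma column_error_bounds (hΩsym : Ω.IsSymm) (hΩ : Ω.PosDef) (hS : S.IsSymm) (hlam0 : 0 < lam)
    (hlam : 3 * matL1 Ω * matLinf (S - Ω⁻¹) ≤ lam)
    (hmin : ∀ β, scioObj S (Pi.single j 1) lam b ≤ scioObj S (Pi.single j 1) lam β)
    {J : Finset (Fin p)} {t X : ℝ} (ht : 0 < t) (htΩ : t = lam * matL1 Ω)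
    (hJ : (J.card : ℝ) * t ≤ X) (hJc : ∑ k ∈ Jᶜ, |Ω k j| ≤ X) (hX : lam * X ≤ t / 2) :
    (∀ k, |b k - Ω k j| ≤ 11 / 3 * t) ∧ vecL1 (b - fun k => Ω k j) ≤ 14 * X := by
  have hcone := vecL1_error_le hS hlam0 hmin (abs_gradient_target_le hΩ hlam j) J
  have hsup := abs_error_le hΩsym hΩ hS hlam0.le hlam hmin
  have hsumJ : ∀ c : ℝ, (∀ k, |b k - Ω k j| ≤ c) → ∑ k ∈ J, |b k - Ω k j| ≤ J.card * c :=
    fun c hc => by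
      rw [← nsmul_eq_mul]
      exact Finset.sum_le_card_nsmul _ _ _ fun k _ => hc k
  have hcard : lam * J.card ≤ 1 / 2 := by
    have := mul_le_mul_of_nonneg_left hJ hlam0.le
    refine le_of_mul_le_mul_right ?_ ht
    linarith
  have hent : ∀ k, |b k - Ω k j| ≤ 11 / 3 * t := by
    have : Nonempty (Fin p) := ⟨j⟩
    obtain ⟨m, hm⟩ := Finite.exists_max fun k => |b k - Ω k j|
    refine fun k => (hm k).trans ?_
    have h1 := hsumJ _ hm
    have h2 := hsup m
    rw [← htΩ] at h2
    have h3 := mul_le_mul_of_nonneg_left hcone hlam0.le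
    have h4 := mul_le_mul_of_nonneg_left h1 hlam0.le
    have h5 := mul_le_mul_of_nonneg_right hcard (abs_nonneg (b m - Ω m j))
    have h6 := mul_le_mul_of_nonneg_left hJc hlam0.le
    linarith
  refine ⟨hent, ?_⟩
  have h1 := hsumJ _ hent
  linarith

end Column

/-- Frobenius-norm bound: the symmetrized SCIO estimator Ω̃ satisfies
(1/p)‖Ω̃ − Ω‖_F² ≤ ‖Ω̃ − Ω‖_{L1}·‖Ω̃ − Ω‖_∞ ≤ 264 λ^{2−q} ‖Ω‖_{L1}^{2−q} s_p. -/
theorem scio_matrix_frobenius_bound {p : ℕ} (q s M : ℝ) (hq0 : 0 ≤ q) (hq1 : q < 1)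
    (hs : 0 < s) (hM : 0 < M)
    (Ω : Matrix (Fin p) (Fin p) ℝ) (hΩsym : Ω.IsSymm) (hΩpd : Ω.PosDef)
    (hΩs : ∀ j, ∑ i, |Ω i j| ^ q ≤ s) (hΩM : matL1 Ω ≤ M)
    (Shat : Matrix (Fin p) (Fin p) ℝ) (hSsym : Shat.IsSymm)
    (lam : ℝ) (hlam0 : 0 ≤ lam)
    (hlam1 : 3 * matL1 Ω * matLinf (Shat - Ω⁻¹) ≤ lam)
    (hlam2 : (matL1 Ω) ^ (-q) * lam ^ (1 - q) * s ≤ 1 / 2)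
    (Ωhat : Matrix (Fin p) (Fin p) ℝ)
    (hmin : ∀ (i : Fin p) (β : Fin p → ℝ),
      scioObj Shat (Pi.single i 1) lam (fun k => Ωhat k i) ≤
        scioObj Shat (Pi.single i 1) lam β) :
    (1 / (p : ℝ)) * (∑ i, ∑ j, ((symmetrize Ωhat - Ω) i j) ^ 2) ≤
        matL1 (symmetrize Ωhat - Ω) * matLinf (symmetrize Ωhat - Ω) ∧
      matL1 (symmetrize Ωhat - Ω) * matLinf (symmetrize Ωhat - Ω) ≤
        264 * lam ^ (2 - q) * (matL1 Ω) ^ (2 - q) * s := by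
  refine ⟨average_frobenius_sq_le _, ?_⟩
  have hL0 := matL1_nonneg Ω
  rcases isEmpty_or_nonempty (Fin p) with hp | ⟨⟨i₀⟩⟩
  · have h0 : matLinf (symmetrize Ωhat - Ω) = 0 := by simp [matLinf]
    rw [h0, mul_zero]
    positivity
  rcases hlam0.eq_or_lt with h0 | hlampos
  · have hent := abs_symmetrize_sub_le hΩsym (A := Ωhat) (c := 0) fun i j => by
      have := abs_error_le hΩsym hΩpd hSsym hlam0 hlam1 (hmin j) i
      simpa [← h0] using this
    have hz : matLinf (symmetrize Ωhat - Ω) = 0 :=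
      le_antisymm (matLinf_le le_rfl hent) (matLinf_nonneg _)
    rw [hz, mul_zero]
    positivity
  have hLpos : 0 < matL1 Ω :=
    (hΩpd.diag_pos (i := i₀)).trans_le <| (le_abs_self _).trans <|
      (Finset.single_le_sum (f := fun i => |Ω i i₀|) (fun _ _ => abs_nonneg _)
        (Finset.mem_univ i₀)).trans (colSum_le_matL1 Ω i₀)
  obtain ⟨t, htΩ⟩ : ∃ t, t = lam * matL1 Ω := ⟨_, rfl⟩
  have ht : 0 < t := htΩ ▸ mul_pos hlampos hLpos
  obtain ⟨X, hXdef⟩ : ∃ X, X = s * t ^ (1 - q) := ⟨_, rfl⟩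
  have hX0 : 0 ≤ X := by rw [hXdef]; positivity
  have hX : lam * X ≤ t / 2 := by
    have e : lam * X = t * ((matL1 Ω) ^ (-q) * lam ^ (1 - q) * s) := by
      rw [hXdef, htΩ, Real.mul_rpow hlam0 hL0, sub_eq_add_neg, Real.rpow_add hLpos,
        Real.rpow_one]
      ring
    rw [e]
    linarith [mul_le_mul_of_nonneg_left hlam2 ht.le]
  have hJ := fun j => hXdef ▸ card_large_mul_le ht hq0 (hΩs j)
  have hJc := fun j => hXdef ▸ sum_small_le ht hq1 (hΩs j)
  have hcol := fun j => column_error_bounds hΩsym hΩpd hSsym hlampos hlam1 (hmin j) ht htΩ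
    (hJ j) (hJc j) hX
  have hent := abs_symmetrize_sub_le hΩsym fun i j => (hcol j).1 i
  have hinf : matLinf (symmetrize Ωhat - Ω) ≤ 11 / 3 * t := matLinf_le (by positivity) hent
  have hone : matL1 (symmetrize Ωhat - Ω) ≤ 20 * X := by
    refine matL1_le (by positivity) fun j => ?_
    rw [← Finset.sum_add_sum_compl (Finset.univ.filter fun i => t ≤ |Ω i j|)]
    have hlarge := Finset.sum_le_card_nsmul (Finset.univ.filter fun i => t ≤ |Ω i j|)
      _ _ fun k _ => hent k j
    rw [nsmul_eq_mul] at hlarge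
    have hsmall : ∑ i ∈ (Finset.univ.filter fun i => t ≤ |Ω i j|)ᶜ, |(symmetrize Ωhat - Ω) i j|
        ≤ vecL1 ((fun k => Ωhat k j) - fun k => Ω k j)
          + 2 * ∑ i ∈ (Finset.univ.filter fun i => t ≤ |Ω i j|)ᶜ, |Ω i j| := by
      refine le_trans ?_ (add_le_add_left (Finset.sum_le_sum_of_subset_of_nonneg
        (Finset.subset_univ (Finset.univ.filter fun i => t ≤ |Ω i j|)ᶜ)
          fun i _ _ => abs_nonneg _) _)
      rw [Finset.mul_sum, ← Finset.sum_add_distrib]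
      refine Finset.sum_le_sum fun i _ => ?_
      have h1 := abs_sub (symmetrize Ωhat i j) (Ω i j)
      have h2 := abs_symmetrize_le Ωhat i j
      have h3 := abs_sub_abs_le_abs_sub (Ωhat i j) (Ω i j)
      simp only [Pi.sub_apply, Matrix.sub_apply]
      linarith
    linarith [hJ j, hJc j, (hcol j).2]
  have hrhs : lam ^ (2 - q) * (matL1 Ω) ^ (2 - q) * s = t * X := by
    rw [hXdef, ← Real.mul_rpow hlam0 hL0, ← htΩ, show 2 - q = 1 + (1 - q) by ring,
      Real.rpow_add ht, Real.rpow_one]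
    ring
  have hprod := mul_le_mul hone hinf (matLinf_nonneg _) (by positivity)
  have := mul_nonneg ht.le hX0
  linarith
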